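/- For δ₀ > 0 define x₁ = (5δ₀/4)/(1+δ₀), f(x) = (δ₀/4)·(x(1+δ₀) − δ₀)⁻¹, e^{−G(x)} = x²·(x/(x(1+δ₀)−δ₀))^{1/4}, and F(x) = (δ₀/4)∫_x^1 (x'/(x'(1+δ₀)−δ₀))^{5/4} dx'. Then there exists δ* > 0 such that for all δ₀ ∈ (0, δ*): F(x₁) + e^{−G(x₁)} < δ₀. -/

import Mathlib

/-! On `[x₁, 1]` the ratio `r = x / (x (1 + δ₀) - δ₀)` lies between `1` and `5`, and `r - 1` is at
most `δ₀ / (x (1 + δ₀) - δ₀)`. By convexity `r ^ p - 1` is at most a constant times `r - 1`, whose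
integral is logarithmic because `x (1 + δ₀) - δ₀` equals `δ₀ / 4` at `x₁`. Hence
`F(x₁) = δ₀ / 4 + O(δ₀² |log δ₀|)`, while `e^{-G(x₁)}` is `O(δ₀²)` because `x₁ = O(δ₀)`. -/

open Asymptotics Filter MeasureTheory Topology

namespace TrappedSurface

theorem rpow_le_one_add_mul_rpow_sub_one {p r : ℝ} (hp : 1 ≤ p) (hr : 0 < r) :
    r ^ p ≤ 1 + p * r ^ (p - 1) * (r - 1) := by
  have bernoulli : 1 + p * (r⁻¹ - 1) ≤ (r ^ p)⁻¹ := by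
    have h := one_add_mul_self_le_rpow_one_add (s := r⁻¹ - 1) (by linarith [inv_pos.2 hr]) hp
    rwa [add_sub_cancel, Real.inv_rpow hr.le] at h
  have hrp : 0 < r ^ p := Real.rpow_pos_of_pos hr p
  rw [Real.rpow_sub_one hr.ne']
  calc r ^ p = r ^ p * (1 + p * (r⁻¹ - 1)) + p * (r ^ p / r) * (r - 1) := by field_simp; ring
    _ ≤ r ^ p * (r ^ p)⁻¹ + p * (r ^ p / r) * (r - 1) := by gcongr
    _ = 1 + p * (r ^ p / r) * (r - 1) := by rw [mul_inv_cancel₀ hrp.ne']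

theorem isBigO_const_log_nhdsGT_zero (c : ℝ) : (fun _ ↦ c) =O[𝓝[>] 0] Real.log :=
  (isLittleO_const_left.2 <| .inr <|
    tendsto_abs_atBot_atTop.comp Real.tendsto_log_nhdsGT_zero).isBigO

theorem isBigO_log_div_const_nhdsGT_zero {c : ℝ} (hc : c ≠ 0) :
    (fun δ ↦ Real.log (δ / c)) =O[𝓝[>] 0] Real.log := by
  refine ((isBigO_refl Real.log _).sub (isBigO_const_log_nhdsGT_zero (Real.log c))).congr' ?_ .rfl
  filter_upwards [self_mem_nhdsWithin] with δ (hδ : 0 < δ)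
  rw [Real.log_div hδ.ne' hc]

theorem isBigO_mul_log_nhdsGT_zero (f : ℝ → ℝ) : f =O[𝓝[>] 0] fun δ ↦ f δ * Real.log δ := by
  simpa only [mul_one] using (isBigO_refl f _).mul (isBigO_const_log_nhdsGT_zero 1)

theorem isLittleO_sq_mul_log_nhdsGT_zero :
    (fun δ ↦ δ ^ 2 * Real.log δ) =o[𝓝[>] 0] fun δ : ℝ ↦ δ := by
  have hlog : (fun δ ↦ Real.log δ * δ) =o[𝓝[>] 0] fun _ ↦ (1 : ℝ) := by
    simpa only [isLittleO_one_iff, Real.rpow_one] using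
      tendsto_log_mul_rpow_nhdsGT_zero zero_lt_one
  exact ((isBigO_refl (fun δ : ℝ ↦ δ) _).mul_isLittleO hlog).congr (fun _ ↦ by ring) mul_one

/-- The quotient `x / (x (1 + δ) - δ)`, whose powers enter both `F` and `e^{-G}`. -/
noncomputable def ratio (δ x : ℝ) : ℝ := x / (x * (1 + δ) - δ)

/-- The function `F` with `F(x₁) + e^{-G(x₁)}` bounding `η₀` when no trapped surface forms. -/
noncomputable def F (δ x : ℝ) : ℝ := δ / 4 * ∫ y in x..1, ratio δ y ^ ((5 : ℝ) / 4)

/-- The integrating factor `e^{-G}` of the trapped surface criterion. It is given by its closed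
form, so that `G` itself is never introduced. -/
noncomputable def expNegG (δ x : ℝ) : ℝ := x ^ 2 * ratio δ x ^ ((1 : ℝ) / 4)

/-- The normalized radius `x₁`, that is, the value of `r₂ / r₂(u₀)` at which the argument for the
criterion terminates. -/
noncomputable def x₁ (δ : ℝ) : ℝ := 5 * δ / 4 / (1 + δ)

section Ratio

variable {δ a b x p : ℝ}

theorem denom_pos_of_le (hδ : 0 ≤ δ) (ha : 0 < a * (1 + δ) - δ) (hax : a ≤ x) :
    0 < x * (1 + δ) - δ :=
  ha.trans_le (by gcongr)

theorem one_le_ratio (hδ : 0 ≤ δ) (hx : 0 < x * (1 + δ) - δ) (hx1 : x ≤ 1) : 1 ≤ ratio δ x :=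
  (one_le_div hx).2 (by nlinarith)

theorem antitoneOn_ratio (hδ : 0 ≤ δ) : AntitoneOn (ratio δ) {x | 0 < x * (1 + δ) - δ} :=
  fun _ ha _ hx hax ↦ (div_le_div_iff₀ hx ha).2 (by nlinarith)

theorem ratio_sub_one_le (hδ : 0 ≤ δ) (hx : 0 < x * (1 + δ) - δ) :
    ratio δ x - 1 ≤ δ * (x * (1 + δ) - δ)⁻¹ := by
  have hx0 : 0 ≤ x := by nlinarith
  rw [ratio, div_sub_one hx.ne', ← div_eq_mul_inv]
  gcongr
  nlinarith

theorem ratio_rpow_le (hδ : 0 ≤ δ) (ha : 0 < a * (1 + δ) - δ) (hax : a ≤ x) (hx1 : x ≤ 1)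
    (hp : 1 ≤ p) :
    ratio δ x ^ p ≤ 1 + p * ratio δ a ^ (p - 1) * (δ * (x * (1 + δ) - δ)⁻¹) := by
  have hx := denom_pos_of_le hδ ha hax
  have hr : 1 ≤ ratio δ x := one_le_ratio hδ hx hx1
  have hra : ratio δ x ≤ ratio δ a := antitoneOn_ratio hδ ha hx hax
  have hra0 : 0 ≤ ratio δ a := by linarith
  calc ratio δ x ^ p ≤ 1 + p * ratio δ x ^ (p - 1) * (ratio δ x - 1) :=
        rpow_le_one_add_mul_rpow_sub_one hp (by positivity)
    _ ≤ 1 + p * ratio δ a ^ (p - 1) * (ratio δ x - 1) := by gcongr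
    _ ≤ 1 + p * ratio δ a ^ (p - 1) * (δ * (x * (1 + δ) - δ)⁻¹) := by
        gcongr
        exact ratio_sub_one_le hδ hx

theorem intervalIntegrable_ratio_rpow (hδ : 0 ≤ δ) (ha : 0 < a * (1 + δ) - δ) (hab : a ≤ b)
    (hp : 0 ≤ p) : IntervalIntegrable (fun x ↦ ratio δ x ^ p) volume a b := by
  refine ContinuousOn.intervalIntegrable_of_Icc hab ?_
  have hratio : ContinuousOn (ratio δ) (Set.Icc a b) :=
    ContinuousOn.div (by fun_prop) (by fun_prop) fun x hx ↦ (denom_pos_of_le hδ ha hx.1).ne'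
  exact hratio.rpow_const fun _ _ ↦ Or.inr hp

theorem intervalIntegrable_inv_denom (hδ : 0 ≤ δ) (ha : 0 < a * (1 + δ) - δ) (hab : a ≤ b) :
    IntervalIntegrable (fun x ↦ (x * (1 + δ) - δ)⁻¹) volume a b :=
  ContinuousOn.intervalIntegrable_of_Icc hab <|
    ContinuousOn.inv₀ (by fun_prop) fun _ hx ↦ (denom_pos_of_le hδ ha hx.1).ne'

theorem integral_inv_denom (hδ : 0 ≤ δ) (ha : 0 < a * (1 + δ) - δ) :
    ∫ x in a..1, (x * (1 + δ) - δ)⁻¹ = -Real.log (a * (1 + δ) - δ) / (1 + δ) := by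
  have hδ1 : 1 + δ ≠ 0 := by positivity
  simp only [mul_comm _ (1 + δ)] at ha ⊢
  rw [intervalIntegral.integral_comp_mul_sub (fun y ↦ y⁻¹) hδ1 δ, mul_one, add_sub_cancel_right,
    integral_inv_of_pos ha one_pos, one_div, Real.log_inv, smul_eq_mul, inv_mul_eq_div]

theorem one_sub_le_integral_ratio_rpow (hδ : 0 ≤ δ) (ha : 0 < a * (1 + δ) - δ) (ha1 : a ≤ 1)
    (hp : 0 ≤ p) : 1 - a ≤ ∫ x in a..1, ratio δ x ^ p :=
  calc 1 - a = ∫ _ in a..1, (1 : ℝ) := by rw [integral_one]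
    _ ≤ ∫ x in a..1, ratio δ x ^ p :=
      intervalIntegral.integral_mono_on ha1 intervalIntegrable_const
        (intervalIntegrable_ratio_rpow hδ ha ha1 hp) fun _ hx ↦
          Real.one_le_rpow (one_le_ratio hδ (denom_pos_of_le hδ ha hx.1) hx.2) hp

theorem integral_ratio_rpow_le (hδ : 0 ≤ δ) (ha : 0 < a * (1 + δ) - δ) (ha1 : a ≤ 1)
    (hp : 1 ≤ p) :
    ∫ x in a..1, ratio δ x ^ p ≤
      1 - a + p * ratio δ a ^ (p - 1) * (δ * -Real.log (a * (1 + δ) - δ)) := by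
  set C := p * ratio δ a ^ (p - 1)
  have hC : 0 ≤ C := by
    have : 0 ≤ ratio δ a := zero_le_one.trans (one_le_ratio hδ ha ha1)
    positivity
  have hlog : 0 ≤ -Real.log (a * (1 + δ) - δ) :=
    neg_nonneg.2 (Real.log_nonpos ha.le (by nlinarith))
  have hinv := ((intervalIntegrable_inv_denom hδ ha ha1).const_mul δ).const_mul C
  calc ∫ x in a..1, ratio δ x ^ p ≤ ∫ x in a..1, (1 + C * (δ * (x * (1 + δ) - δ)⁻¹)) :=
        intervalIntegral.integral_mono_on ha1
          (intervalIntegrable_ratio_rpow hδ ha ha1 (by linarith))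
          (intervalIntegrable_const.add hinv) fun _ hx ↦ ratio_rpow_le hδ ha hx.1 hx.2 hp
    _ = 1 - a + C * (δ * (-Real.log (a * (1 + δ) - δ) / (1 + δ))) := by
        rw [intervalIntegral.integral_add intervalIntegrable_const hinv, integral_one,
          intervalIntegral.integral_const_mul, intervalIntegral.integral_const_mul,
          integral_inv_denom hδ ha]
    _ ≤ 1 - a + C * (δ * -Real.log (a * (1 + δ) - δ)) := by
        gcongr
        exact div_le_self hlog (by linarith)

end Ratio

section Radius

variable {δ : ℝ}

theorem denom_x₁ (hδ : 0 ≤ δ) : x₁ δ * (1 + δ) - δ = δ / 4 := by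
  rw [x₁, div_mul_cancel₀ _ (by positivity)]
  ring

theorem x₁_nonneg (hδ : 0 ≤ δ) : 0 ≤ x₁ δ := by
  rw [x₁]
  positivity

theorem x₁_le (hδ : 0 ≤ δ) : x₁ δ ≤ 5 / 4 * δ := by
  rw [x₁, mul_div_right_comm]
  exact div_le_self (by positivity) (by linarith)

theorem ratio_x₁_nonneg (hδ : 0 ≤ δ) : 0 ≤ ratio δ (x₁ δ) := by
  rw [ratio, denom_x₁ hδ]
  exact div_nonneg (x₁_nonneg hδ) (by positivity)

theorem ratio_x₁_le_five (hδ : 0 < δ) : ratio δ (x₁ δ) ≤ 5 := by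
  rw [ratio, denom_x₁ hδ.le, div_le_iff₀ (by positivity)]
  linarith [x₁_le hδ.le]

end Radius

section Asymptotics

theorem isBigO_x₁ : x₁ =O[𝓝[>] 0] fun δ ↦ δ := by
  refine IsBigO.of_bound (5 / 4) ?_
  filter_upwards [self_mem_nhdsWithin] with δ (hδ : 0 < δ)
  rw [Real.norm_of_nonneg (x₁_nonneg hδ.le), Real.norm_of_nonneg hδ.le]
  exact x₁_le hδ.le

theorem isBigO_ratio_x₁_rpow {p : ℝ} (hp : 0 ≤ p) :
    (fun δ ↦ ratio δ (x₁ δ) ^ p) =O[𝓝[>] 0] fun _ ↦ (1 : ℝ) := by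
  refine IsBigO.of_bound (5 ^ p) ?_
  filter_upwards [self_mem_nhdsWithin] with δ (hδ : 0 < δ)
  have hr := ratio_x₁_nonneg hδ.le
  rw [Real.norm_of_nonneg (by positivity), norm_one, mul_one]
  exact Real.rpow_le_rpow hr (ratio_x₁_le_five hδ) hp

theorem isBigO_integral_ratio_rpow_sub_one {p : ℝ} (hp : 1 ≤ p) :
    (fun δ ↦ (∫ x in x₁ δ..1, ratio δ x ^ p) - 1) =O[𝓝[>] 0] fun δ ↦ δ * Real.log δ := by
  have hbound : (fun δ ↦ (∫ x in x₁ δ..1, ratio δ x ^ p) - 1) =O[𝓝[>] 0]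
      fun δ ↦ x₁ δ + p * ratio δ (x₁ δ) ^ (p - 1) * (δ * -Real.log (δ / 4)) := by
    refine IsBigO.of_norm_eventuallyLE ?_
    filter_upwards [Ioo_mem_nhdsGT (show (0 : ℝ) < 4 / 5 by norm_num)] with δ ⟨hδ, hδ_lt⟩
    have hdenom : 0 < x₁ δ * (1 + δ) - δ := by rw [denom_x₁ hδ.le]; positivity
    have hx₁ : x₁ δ ≤ 1 := by linarith [x₁_le hδ.le]
    have hlower := one_sub_le_integral_ratio_rpow hδ.le hdenom hx₁ (zero_le_one.trans hp)
    have hupper := integral_ratio_rpow_le hδ.le hdenom hx₁ hp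
    rw [denom_x₁ hδ.le] at hupper
    rw [Real.norm_eq_abs, abs_le]
    constructor <;> linarith [x₁_nonneg hδ.le]
  have hcoeff : (fun δ ↦ p * ratio δ (x₁ δ) ^ (p - 1)) =O[𝓝[>] 0] fun _ ↦ (1 : ℝ) :=
    (isBigO_ratio_x₁_rpow (sub_nonneg.2 hp)).const_mul_left p
  have hlog : (fun δ ↦ δ * -Real.log (δ / 4)) =O[𝓝[>] 0] fun δ ↦ δ * Real.log δ :=
    (isBigO_refl _ _).mul (isBigO_log_div_const_nhdsGT_zero four_ne_zero).neg_left
  refine hbound.trans ((isBigO_x₁.trans (isBigO_mul_log_nhdsGT_zero _)).add ?_)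
  simpa only [one_mul] using hcoeff.mul hlog

theorem isBigO_F_x₁_sub :
    (fun δ ↦ F δ (x₁ δ) - δ / 4) =O[𝓝[>] 0] fun δ ↦ δ ^ 2 * Real.log δ := by
  have hint := isBigO_integral_ratio_rpow_sub_one (p := 5 / 4) (by norm_num)
  refine (((isBigO_refl (fun δ : ℝ ↦ δ) _).const_mul_left (1 / 4)).mul hint).congr ?_ ?_
  · intro δ
    rw [F]
    ring
  · intro δ
    ring

theorem isBigO_expNegG_x₁ : (fun δ ↦ expNegG δ (x₁ δ)) =O[𝓝[>] 0] fun δ ↦ δ ^ 2 := by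
  have hratio := isBigO_ratio_x₁_rpow (p := 1 / 4) (by norm_num)
  simpa only [expNegG, mul_one] using (isBigO_x₁.pow 2).mul hratio

theorem isBigO_F_add_expNegG_x₁_sub :
    (fun δ ↦ F δ (x₁ δ) + expNegG δ (x₁ δ) - δ / 4) =O[𝓝[>] 0] fun δ ↦ δ ^ 2 * Real.log δ := by
  have hG := isBigO_expNegG_x₁.trans (isBigO_mul_log_nhdsGT_zero _)
  refine (isBigO_F_x₁_sub.add hG).congr_left fun δ ↦ ?_
  ring

theorem eventually_F_add_expNegG_x₁_lt : ∀ᶠ δ in 𝓝[>] 0, F δ (x₁ δ) + expNegG δ (x₁ δ) < δ := by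
  have herror := isBigO_F_add_expNegG_x₁_sub.trans_isLittleO isLittleO_sq_mul_log_nhdsGT_zero
  filter_upwards [herror.bound one_half_pos, self_mem_nhdsWithin] with δ hbound (hδ : 0 < δ)
  rw [Real.norm_of_nonneg hδ.le] at hbound
  linarith [Real.le_norm_self (F δ (x₁ δ) + expNegG δ (x₁ δ) - δ / 4)]

end Asymptotics

end TrappedSurface

/-- Final quantitative estimate in the trapped surface formation criterion:
`F(x₁) + e^{−G(x₁)} < δ₀` for all sufficiently small `δ₀`. -/
theorem stmt_15 :
    ∃ δstar > (0:ℝ), ∀ δ₀ : ℝ, 0 < δ₀ → δ₀ < δstar →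
      (δ₀ / 4 * ∫ x' in ((5 * δ₀ / 4) / (1 + δ₀))..(1:ℝ),
          (x' / (x' * (1 + δ₀) - δ₀)) ^ ((5:ℝ)/4)) +
        ((5 * δ₀ / 4) / (1 + δ₀)) ^ 2 *
          (((5 * δ₀ / 4) / (1 + δ₀)) /
            (((5 * δ₀ / 4) / (1 + δ₀)) * (1 + δ₀) - δ₀)) ^ ((1:ℝ)/4)
        < δ₀ := by
  obtain ⟨δstar, hδstar, hsubset⟩ :=
    mem_nhdsGT_iff_exists_Ioo_subset.1 TrappedSurface.eventually_F_add_expNegG_x₁_lt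
  exact ⟨δstar, hδstar, fun δ₀ hδ₀ hδ₀_lt ↦ hsubset ⟨hδ₀, hδ₀_lt⟩⟩
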